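/- arXiv:2011.03858 — 4 statements merged into one kernel-verified Lean document; each statement's English description precedes it below -/
import Mathlib

section
/- For all positive integers n and m with n ≥ 2 and m ≤ ⌊(n+1)/2⌋ + 1, lcm(R_m, R_{m+1}, …, R_n) ≥ gcd(R_0, R_1) · ((R_1 + R_0·|β|)/gcd(R_0, R_1))^{(n−1)/2} · α^{n²/4 − n/2 − 7/4}, where α := (P + √Δ)/2 and β := (P − √Δ)/2. -/
/-! Outside its largest term, the prime-power content of a product of consecutive terms of `R` is
controlled by pairwise gcds; a common divisor of `R i` and `R j` divides `U (j - i)`, where `U` is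
the Lucas sequence with the same coefficients, at least when `R` is reduced (`R 0`, `R 1` coprime,
and `R 1` coprime to `Q`). Since the products `U 1 ⋯ U N` satisfy the divisibility of factorials,
`R k ⋯ R (k + N)` divides `lcm (R k, …, R (k + N)) * (U 1 ⋯ U N)`. Comparing both
sides through `U (j + 1) ≤ α ^ j` and `R (j + 2) ≥ (R 1 - β * R 0) * α ^ j`, with `k` about `n / 2`,
gives the bound in the reduced case; in general one divides `R` by `gcd (R 0, R 1)`. -/

open Finset

section PairwiseGcd

variable {ι M : Type*} [DecidableEq ι] [CommMonoidWithZero M] [UniqueFactorizationMonoid M]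
  [GCDMonoid M]

theorem prod_dvd_mul_of_prod_erase_gcd_dvd (s : Finset ι) (x : ι → M) {l m : M}
    (hl : ∀ i ∈ s, x i ∣ l) (hm : ∀ i ∈ s, ∏ j ∈ s.erase i, gcd (x i) (x j) ∣ m) :
    ∏ i ∈ s, x i ∣ l * m := by
  rcases s.eq_empty_or_nonempty with rfl | hs
  · simp
  nontriviality M
  by_cases hzero : ∏ i ∈ s, x i = 0
  · obtain ⟨i, hi, hxi⟩ := prod_eq_zero_iff.mp hzero
    have hl0 : l = 0 := zero_dvd_iff.mp (hxi ▸ hl i hi)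
    simp [hl0]
  refine (UniqueFactorizationMonoid.dvd_iff_emultiplicity_le hzero).mpr fun p hp ↦ ?_
  -- A term with the largest `p`-part contributes to `l`, and each other one to a gcd with it.
  obtain ⟨i, hi, hmax⟩ := s.exists_max_image (fun j ↦ emultiplicity p (x j)) hs
  have hgcd (j : ι) (hj : j ∈ s) : emultiplicity p (x j) ≤ emultiplicity p (gcd (x i) (x j)) :=
    emultiplicity_le_emultiplicity_iff.mpr fun _ hdvd ↦
      dvd_gcd (emultiplicity_le_emultiplicity_iff.mp (hmax j hj) _ hdvd) hdvd
  calc emultiplicity p (∏ j ∈ s, x j)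
      = emultiplicity p (x i) + ∑ j ∈ s.erase i, emultiplicity p (x j) := by
        rw [← mul_prod_erase s x hi, emultiplicity_mul hp, Finset.emultiplicity_prod hp]
    _ ≤ emultiplicity p (x i) + ∑ j ∈ s.erase i, emultiplicity p (gcd (x i) (x j)) := by
        gcongr with j hj
        exact hgcd j (mem_of_mem_erase hj)
    _ = emultiplicity p (x i * ∏ j ∈ s.erase i, gcd (x i) (x j)) := by
        rw [emultiplicity_mul hp, Finset.emultiplicity_prod hp]
    _ ≤ emultiplicity p (l * m) :=
        emultiplicity_le_emultiplicity_of_dvd_right (mul_dvd_mul (hl i hi) (hm i hi))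

end PairwiseGcd

theorem prod_range_erase {M : Type*} [CommMonoid M] (f : ℕ → M) (i k : ℕ) :
    ∏ j ∈ (range (i + 1 + k)).erase i, f j =
      (∏ j ∈ range i, f j) * ∏ j ∈ range k, f (i + 1 + j) := by
  have hi : i ∈ range (i + 1 + k) := by simp; omega
  rw [← sdiff_singleton_eq_erase, ← one_mul (∏ j ∈ _, _), ← prod_update_of_mem hi,
    prod_range_add, prod_range_succ, Function.update_self, mul_one]
  congr 1 <;> refine prod_congr rfl fun j hj ↦ Function.update_of_ne ?_ _ _
  · exact (mem_range.mp hj).ne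
  · omega

theorem prod_range_succ_mul_pow_add {M : Type*} [CommSemiring M] (c a : M) (t N : ℕ) :
    ∏ j ∈ range (N + 1), c * a ^ (t + j) =
      c ^ (N + 1) * a ^ (t * (N + 1) + N) * ∏ j ∈ range N, a ^ j := by
  simp only [pow_add, prod_mul_distrib, prod_const, card_range, prod_range_succ, pow_mul]
  ring

/-- `S` satisfies the second-order linear recurrence with characteristic polynomial
`x ^ 2 - P * x + Q`. The initial values are left free, so that `S`, its images under ring
homomorphisms and its quotients by a common divisor all satisfy such a recurrence. -/
def IsBinaryRecurrence {A : Type*} [CommRing A] (P Q : A) (S : ℕ → A) : Prop :=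
  ∀ n, S (n + 2) = P * S (n + 1) - Q * S n

/-- The Lucas sequence `U` of the first kind with parameters `P` and `Q`, which expresses every
solution of the recurrence by two consecutive terms of it. -/
def lucasU {A : Type*} [CommRing A] (P Q : A) : ℕ → A
  | 0 => 0
  | 1 => 1
  | n + 2 => P * lucasU P Q (n + 1) - Q * lucasU P Q n

/-- The Lucas factorial `U 1 * ⋯ * U n`, the analogue of `n !` whose binomial quotients are the
Lucasnomial coefficients. -/
def lucasFactorial {A : Type*} [CommRing A] (P Q : A) (n : ℕ) : A :=
  ∏ j ∈ range n, lucasU P Q (j + 1)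

section CommRing

variable {A B : Type*} [CommRing A] [CommRing B] {P Q : A} {S : ℕ → A}

theorem isBinaryRecurrence_lucasU (P Q : A) : IsBinaryRecurrence P Q (lucasU P Q) :=
  fun _ ↦ rfl

theorem map_lucasU (f : A →+* B) (P Q : A) (n : ℕ) :
    f (lucasU P Q n) = lucasU (f P) (f Q) n := by
  induction n using Nat.twoStepInduction with
  | zero | one => simp [lucasU]
  | more n ih₀ ih₁ => simp [lucasU, ih₀, ih₁]

theorem map_lucasFactorial (f : A →+* B) (P Q : A) (n : ℕ) :
    f (lucasFactorial P Q n) = lucasFactorial (f P) (f Q) n := by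
  simp only [lucasFactorial, map_prod, map_lucasU]

theorem lucasFactorial_succ (P Q : A) (n : ℕ) :
    lucasFactorial P Q (n + 1) = lucasFactorial P Q n * lucasU P Q (n + 1) :=
  prod_range_succ _ _

namespace IsBinaryRecurrence

theorem map (hS : IsBinaryRecurrence P Q S) (f : A →+* B) :
    IsBinaryRecurrence (f P) (f Q) fun n ↦ f (S n) :=
  fun n ↦ by simp [hS n]

theorem dvd_apply {d : A} (hS : IsBinaryRecurrence P Q S) (h₀ : d ∣ S 0) (h₁ : d ∣ S 1) (n : ℕ) :
    d ∣ S n := by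
  induction n using Nat.twoStepInduction with
  | zero => exact h₀
  | one => exact h₁
  | more n ih₀ ih₁ => exact hS n ▸ dvd_sub (ih₁.mul_left P) (ih₀.mul_left Q)

theorem apply_add_succ (hS : IsBinaryRecurrence P Q S) (a b : ℕ) :
    S (a + b + 1) = lucasU P Q (b + 1) * S (a + 1) - Q * lucasU P Q b * S a := by
  induction b using Nat.twoStepInduction with
  | zero => simp [lucasU]
  | one => simpa [lucasU] using hS a
  | more b ih₀ ih₁ =>
    calc S (a + (b + 2) + 1) = P * S (a + (b + 1) + 1) - Q * S (a + b + 1) := hS (a + b + 1)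
      _ = _ := by
        rw [ih₀, ih₁, isBinaryRecurrence_lucasU P Q (b + 1), isBinaryRecurrence_lucasU P Q b]
        ring

theorem apply_succ_sub_mul {α β : A} (hS : IsBinaryRecurrence (α + β) (α * β) S) (n : ℕ) :
    S (n + 1) - β * S n = (S 1 - β * S 0) * α ^ n := by
  induction n with
  | zero => simp
  | succ n ih => rw [hS, pow_succ, ← mul_assoc, ← ih]; ring

end IsBinaryRecurrence

theorem lucasU_add_succ (P Q : A) (a b : ℕ) :
    lucasU P Q (a + b + 1) =
      lucasU P Q (b + 1) * lucasU P Q (a + 1) - Q * lucasU P Q b * lucasU P Q a :=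
  (isBinaryRecurrence_lucasU P Q).apply_add_succ a b

theorem lucasFactorial_mul_dvd (P Q : A) :
    ∀ a b, lucasFactorial P Q a * lucasFactorial P Q b ∣ lucasFactorial P Q (a + b)
  | 0, b => by simp [lucasFactorial]
  | a + 1, 0 => by simp [lucasFactorial]
  | a + 1, b + 1 => by
    -- The Lucas analogue of Pascal's rule.
    have hrec : lucasFactorial P Q (a + 1 + (b + 1)) =
        lucasFactorial P Q (a + (b + 1)) * lucasU P Q (a + 1) * lucasU P Q (b + 2) -
          lucasFactorial P Q (a + 1 + b) * lucasU P Q (b + 1) * (Q * lucasU P Q a) := by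
      rw [← add_assoc, lucasFactorial_succ, add_right_comm, add_assoc a b 1, lucasU_add_succ]
      ring
    rw [hrec]
    refine dvd_sub (Dvd.dvd.mul_right ?_ _) (Dvd.dvd.mul_right ?_ _)
    · rw [lucasFactorial_succ P Q a, mul_right_comm]
      exact mul_dvd_mul_right (lucasFactorial_mul_dvd P Q a (b + 1)) _
    · rw [lucasFactorial_succ P Q b, ← mul_assoc]
      exact mul_dvd_mul_right (lucasFactorial_mul_dvd P Q (a + 1) b) _

end CommRing

namespace IsBinaryRecurrence

section Divisibility

variable {A : Type*} [CommRing A] {P Q : A} {S : ℕ → A}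

theorem isRelPrime_and_isRelPrime_succ [DecompositionMonoid A] (hS : IsBinaryRecurrence P Q S)
    (hPQ : IsRelPrime P Q) (h₁Q : IsRelPrime (S 1) Q) (h₀₁ : IsRelPrime (S 0) (S 1)) (n : ℕ) :
    IsRelPrime (S (n + 1)) Q ∧ IsRelPrime (S n) (S (n + 1)) := by
  induction n with
  | zero => exact ⟨h₁Q, h₀₁⟩
  | succ n ih =>
    obtain ⟨hQ, hsucc⟩ := ih
    rw [hS n]
    refine ⟨IsRelPrime.sub_mul_left_left_iff.mpr (hPQ.mul_left hQ), ?_⟩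
    rw [sub_eq_neg_add, IsRelPrime.add_mul_right_right_iff, IsRelPrime.neg_right_iff]
    exact hQ.mul_right hsucc.symm

theorem dvd_lucasU [DecompositionMonoid A] (hS : IsBinaryRecurrence P Q S)
    (hPQ : IsRelPrime P Q) (h₁Q : IsRelPrime (S 1) Q) (h₀₁ : IsRelPrime (S 0) (S 1))
    {x : A} {a b : ℕ} (ha : x ∣ S (a + 1)) (hab : x ∣ S (a + b + 1)) : x ∣ lucasU P Q b := by
  obtain ⟨hQ, hsucc⟩ := hS.isRelPrime_and_isRelPrime_succ hPQ h₁Q h₀₁ a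
  rw [hS.apply_add_succ, dvd_sub_right (ha.mul_left _)] at hab
  exact (hQ.of_dvd_left ha).dvd_of_dvd_mul_left
    ((hsucc.symm.of_dvd_left ha).dvd_of_dvd_mul_right hab)

theorem prod_erase_gcd_dvd_lucasFactorial [GCDMonoid A] (hS : IsBinaryRecurrence P Q S)
    (hPQ : IsRelPrime P Q) (h₁Q : IsRelPrime (S 1) Q) (h₀₁ : IsRelPrime (S 0) (S 1))
    (k : ℕ) {i N : ℕ} (hi : i ≤ N) :
    ∏ j ∈ (range (N + 1)).erase i, gcd (S (k + i + 1)) (S (k + j + 1)) ∣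
      lucasFactorial P Q N := by
  obtain ⟨M, rfl⟩ := Nat.exists_eq_add_of_le hi
  rw [add_right_comm, prod_range_erase]
  refine dvd_trans (mul_dvd_mul ?_ ?_) (lucasFactorial_mul_dvd P Q i M)
  · rw [lucasFactorial, ← prod_range_reflect fun j ↦ lucasU P Q (j + 1)]
    refine prod_dvd_prod_of_dvd _ _ fun j hj ↦
      hS.dvd_lucasU hPQ h₁Q h₀₁ (a := k + j) (gcd_dvd_right _ _) ?_
    have hji : k + j + (i - 1 - j + 1) = k + i := by have := mem_range.mp hj; omega
    exact hji ▸ gcd_dvd_left _ _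
  · refine prod_dvd_prod_of_dvd _ _ fun j _ ↦
      hS.dvd_lucasU hPQ h₁Q h₀₁ (a := k + i) (gcd_dvd_left _ _) ?_
    have hij : k + i + (j + 1) = k + (i + 1 + j) := by omega
    exact hij ▸ gcd_dvd_right _ _

theorem prod_dvd_mul_lucasFactorial [UniqueFactorizationMonoid A] (hS : IsBinaryRecurrence P Q S)
    (hPQ : IsRelPrime P Q) (h₁Q : IsRelPrime (S 1) Q) (h₀₁ : IsRelPrime (S 0) (S 1))
    {k N : ℕ} {l : A} (hl : ∀ j ≤ N, S (k + j + 1) ∣ l) :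
    ∏ j ∈ range (N + 1), S (k + j + 1) ∣ l * lucasFactorial P Q N := by
  let := UniqueFactorizationMonoid.toGCDMonoid A
  exact prod_dvd_mul_of_prod_erase_gcd_dvd _ (fun j ↦ S (k + j + 1))
    (fun j hj ↦ hl j (mem_range_succ_iff.mp hj))
    fun i hi ↦ hS.prod_erase_gcd_dvd_lucasFactorial hPQ h₁Q h₀₁ k (mem_range_succ_iff.mp hi)

end Divisibility

section Order

variable {K : Type*} [CommRing K] [LinearOrder K] [IsStrictOrderedRing K] {P Q : K} {S : ℕ → K}

theorem nonneg (hS : IsBinaryRecurrence P Q S) (hP : 0 ≤ P) (hQ : Q ≤ 0) (h₀ : 0 ≤ S 0)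
    (h₁ : 0 ≤ S 1) (n : ℕ) : 0 ≤ S n := by
  induction n using Nat.twoStepInduction with
  | zero => exact h₀
  | one => exact h₁
  | more n ih₀ ih₁ =>
    rw [hS n]
    exact sub_nonneg.mpr ((mul_nonpos_of_nonpos_of_nonneg hQ ih₀).trans (mul_nonneg hP ih₁))

theorem pos_succ (hS : IsBinaryRecurrence P Q S) (hP : 0 < P) (hQ : Q ≤ 0) (h₀ : 0 ≤ S 0)
    (h₁ : 0 < S 1) (n : ℕ) : 0 < S (n + 1) := by
  induction n with
  | zero => exact h₁
  | succ n ih =>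
    have hSn := hS.nonneg hP.le hQ h₀ h₁.le n
    rw [hS n]
    exact sub_pos.mpr ((mul_nonpos_of_nonpos_of_nonneg hQ hSn).trans_lt (mul_pos hP ih))

theorem mul_pow_le {α β : K} (hS : IsBinaryRecurrence (α + β) (α * β) S) (hβ : β ≤ 0)
    (hsum : 1 ≤ α + β) (h₀ : 0 ≤ S 0) (h₁ : 0 ≤ S 1) (n : ℕ) :
    (S 1 - β * S 0) * α ^ n ≤ S (n + 2) := by
  have hα : 0 < α := by linarith
  have hQ : α * β ≤ 0 := mul_nonpos_of_nonneg_of_nonpos hα.le hβ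
  have hnonneg := hS.nonneg (by linarith) hQ h₀ h₁
  have hmono : S (n + 1) ≤ S (n + 2) := by
    rw [hS n]
    nlinarith [hnonneg n, hnonneg (n + 1)]
  refine le_of_mul_le_mul_right ?_ hα
  calc (S 1 - β * S 0) * α ^ n * α = S (n + 2) - β * S (n + 1) := by
        rw [hS.apply_succ_sub_mul (n + 1), pow_succ, mul_assoc]
    _ ≤ (1 - β) * S (n + 2) := by nlinarith
    _ ≤ S (n + 2) * α := by nlinarith [hnonneg (n + 2)]

end Order

end IsBinaryRecurrence

section LucasOrder

variable {K : Type*} [CommRing K] [LinearOrder K] [IsStrictOrderedRing K]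

theorem lucasU_nonneg {P Q : K} (hP : 0 ≤ P) (hQ : Q ≤ 0) (n : ℕ) : 0 ≤ lucasU P Q n :=
  (isBinaryRecurrence_lucasU P Q).nonneg hP hQ le_rfl zero_le_one n

theorem lucasFactorial_pos {P Q : K} (hP : 0 < P) (hQ : Q ≤ 0) (n : ℕ) :
    0 < lucasFactorial P Q n :=
  prod_pos fun j _ ↦ (isBinaryRecurrence_lucasU P Q).pos_succ hP hQ le_rfl zero_lt_one j

theorem lucasU_succ_le_pow {α β : K} (hβ : β ≤ 0) (hsum : 0 ≤ α + β) (n : ℕ) :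
    lucasU (α + β) (α * β) (n + 1) ≤ α ^ n := by
  have hQ : α * β ≤ 0 := mul_nonpos_of_nonneg_of_nonpos (by linarith) hβ
  have hbinet : lucasU (α + β) (α * β) (n + 1) - β * lucasU (α + β) (α * β) n = α ^ n := by
    simpa [lucasU] using (isBinaryRecurrence_lucasU (α + β) (α * β)).apply_succ_sub_mul n
  linarith [mul_nonpos_of_nonpos_of_nonneg hβ (lucasU_nonneg hsum hQ n)]

theorem lucasFactorial_le_prod_pow {α β : K} (hβ : β ≤ 0) (hsum : 0 ≤ α + β) (n : ℕ) :
    lucasFactorial (α + β) (α * β) n ≤ ∏ j ∈ range n, α ^ j :=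
  prod_le_prod
    (fun j _ ↦ lucasU_nonneg hsum (mul_nonpos_of_nonneg_of_nonpos (by linarith) hβ) (j + 1))
    fun j _ ↦ lucasU_succ_le_pow hβ hsum j

theorem IsBinaryRecurrence.pow_mul_pow_mul_lucasFactorial_le_prod {α β : K} {S : ℕ → K}
    (hS : IsBinaryRecurrence (α + β) (α * β) S) (hβ : β ≤ 0) (hsum : 1 ≤ α + β) (h₀ : 0 ≤ S 0)
    (h₁ : 0 ≤ S 1) (t N : ℕ) :
    (S 1 - β * S 0) ^ (N + 1) * α ^ (t * (N + 1) + N) * lucasFactorial (α + β) (α * β) N ≤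
      ∏ j ∈ range (N + 1), S (t + 1 + j + 1) := by
  have hα : 0 ≤ α := by linarith
  have hc : 0 ≤ S 1 - β * S 0 := by nlinarith
  calc (S 1 - β * S 0) ^ (N + 1) * α ^ (t * (N + 1) + N) * lucasFactorial (α + β) (α * β) N
      ≤ (S 1 - β * S 0) ^ (N + 1) * α ^ (t * (N + 1) + N) * ∏ j ∈ range N, α ^ j := by
        gcongr
        exact lucasFactorial_le_prod_pow hβ (by linarith) N
    _ = ∏ j ∈ range (N + 1), (S 1 - β * S 0) * α ^ (t + j) :=
        (prod_range_succ_mul_pow_add _ _ _ _).symm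
    _ ≤ ∏ j ∈ range (N + 1), S (t + 1 + j + 1) :=
        prod_le_prod (fun _ _ ↦ by positivity) fun j _ ↦ by
          simpa only [add_right_comm t 1 j] using hS.mul_pow_le hβ hsum h₀ h₁ (t + j)

end LucasOrder

theorem exists_half_eq_and_quarter_sq_eq {n : ℕ} (hn : 2 ≤ n) :
    ∃ t N, (n + 1) / 2 = t + 1 ∧ n / 2 = N + 1 ∧ n ^ 2 / 4 - 1 = t * (N + 1) + N := by
  obtain ⟨N, rfl | rfl⟩ : ∃ N, n = 2 * N + 2 ∨ n = 2 * N + 3 := ⟨n / 2 - 1, by omega⟩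
  · refine ⟨N, N, by omega, by omega, ?_⟩
    ring_nf
    omega
  · refine ⟨N + 1, N, by omega, by omega, ?_⟩
    ring_nf
    omega

namespace IsBinaryRecurrence

variable {P Q : ℤ} {S : ℕ → ℤ}

theorem ediv {d : ℤ} (hS : IsBinaryRecurrence P Q S) (h₀ : d ∣ S 0) (h₁ : d ∣ S 1) :
    IsBinaryRecurrence P Q fun n ↦ S n / d := by
  intro n
  have hdvd := hS.dvd_apply h₀ h₁
  change S (n + 2) / d = P * (S (n + 1) / d) - Q * (S n / d)
  rw [hS n, Int.sub_ediv_of_dvd _ ((hdvd n).mul_left Q), Int.mul_ediv_assoc _ (hdvd (n + 1)),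
    Int.mul_ediv_assoc _ (hdvd n)]

theorem lcm_pos (hS : IsBinaryRecurrence P Q S) (hP : 0 < P) (hQ : Q ≤ 0) (h₀ : 0 ≤ S 0)
    (h₁ : 0 < S 1) {m : ℕ} (hm : 1 ≤ m) (n : ℕ) : 0 < (Icc m n).lcm S := by
  refine lt_of_le_of_ne ?_ (Finset.lcm_ne_zero_iff.mpr fun i hi ↦ ?_).symm
  · rw [← Finset.normalize_lcm, ← Int.abs_eq_normalize]
    exact abs_nonneg _
  · obtain ⟨k, rfl⟩ := Nat.exists_eq_add_of_le' (hm.trans (mem_Icc.mp hi).1)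
    exact (hS.pos_succ hP hQ h₀ h₁ k).ne'

theorem pow_mul_pow_le_of_forall_dvd {K : Type*} [CommRing K] [LinearOrder K]
    [IsStrictOrderedRing K] (hS : IsBinaryRecurrence P Q S) (hP : 0 < P)
    (hPQ : IsCoprime P Q) (h₁Q : IsCoprime (S 1) Q) (h₀₁ : IsCoprime (S 0) (S 1))
    (h₀ : 0 ≤ S 0) (h₁ : 0 < S 1) {α β : K} (hsum : (P : K) = α + β) (hprod : (Q : K) = α * β)
    (hβ : β ≤ 0) {n : ℕ} (hn : 2 ≤ n) {l : ℤ} (hl : 0 < l)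
    (hdvd : ∀ i ∈ Icc ((n + 1) / 2 + 1) n, S i ∣ l) :
    (S 1 - β * S 0 : K) ^ (n / 2) * α ^ (n ^ 2 / 4 - 1) ≤ l := by
  obtain ⟨t, N, ht, hN, hexp⟩ := exists_half_eq_and_quarter_sq_eq hn
  have hP_one : (1 : K) ≤ P := mod_cast hP
  have hPK : (0 : K) < P := by linarith
  have hQK : (Q : K) ≤ 0 := hprod.trans_le (mul_nonpos_of_nonneg_of_nonpos (by linarith) hβ)
  have hdvd_prod : ∏ j ∈ range (N + 1), S (t + 1 + j + 1) ∣ l * lucasFactorial P Q N :=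
    hS.prod_dvd_mul_lucasFactorial hPQ.isRelPrime h₁Q.isRelPrime h₀₁.isRelPrime
      fun j hj ↦ hdvd _ (mem_Icc.mpr (by omega))
  have hle := Int.le_of_dvd (mul_pos hl (lucasFactorial_pos hP (mod_cast hQK) N)) hdvd_prod
  have hcast : ((lucasFactorial P Q N : ℤ) : K) = lucasFactorial (P : K) (Q : K) N :=
    map_lucasFactorial (Int.castRingHom K) P Q N
  have hSK : IsBinaryRecurrence (P : K) (Q : K) fun n ↦ (S n : K) := hS.map (Int.castRingHom K)
  rw [hN, hexp]
  refine le_of_mul_le_mul_right ?_ (lucasFactorial_pos hPK hQK N)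
  calc (S 1 - β * S 0 : K) ^ (N + 1) * α ^ (t * (N + 1) + N) * lucasFactorial (P : K) (Q : K) N
      ≤ ∏ j ∈ range (N + 1), (S (t + 1 + j + 1) : K) := by
        rw [hsum, hprod] at hSK ⊢
        exact hSK.pow_mul_pow_mul_lucasFactorial_le_prod hβ (hsum ▸ hP_one) (mod_cast h₀)
          (mod_cast h₁.le) t N
    _ ≤ l * lucasFactorial (P : K) (Q : K) N := hcast ▸ mod_cast hle

theorem gcd_mul_pow_mul_pow_le_lcm {K : Type*} [Field K] [LinearOrder K] [IsStrictOrderedRing K]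
    (hS : IsBinaryRecurrence P Q S) (hP : 0 < P) (hPQ : IsCoprime P Q)
    (h₁Q : IsCoprime (S 1 / Int.gcd (S 0) (S 1)) Q) (h₀ : 0 ≤ S 0) (h₁ : 0 < S 1) {α β : K}
    (hsum : (P : K) = α + β) (hprod : (Q : K) = α * β) (hβ : β ≤ 0)
    {n m : ℕ} (hm : 1 ≤ m) (hn : 2 ≤ n) (hmn : m ≤ (n + 1) / 2 + 1) :
    (Int.gcd (S 0) (S 1) : K) * ((S 1 - β * S 0) / Int.gcd (S 0) (S 1)) ^ (n / 2) *
      α ^ (n ^ 2 / 4 - 1) ≤ ((Icc m n).lcm S : ℤ) := by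
  set d := Int.gcd (S 0) (S 1)
  have hd : 0 < d := Int.gcd_pos_of_ne_zero_right _ h₁.ne'
  have hdZ : (0 : ℤ) < d := mod_cast hd
  have hdK : (0 : K) < d := mod_cast hd
  have hd₀ : (d : ℤ) ∣ S 0 := Int.gcd_dvd_left _ _
  have hd₁ : (d : ℤ) ∣ S 1 := Int.gcd_dvd_right _ _
  have hQ : Q ≤ 0 := by
    have hP_one : (1 : K) ≤ P := mod_cast hP
    exact_mod_cast hprod.trans_le (mul_nonpos_of_nonneg_of_nonpos (by linarith) hβ)
  have hS_dvd (i : ℕ) (hi : i ∈ Icc ((n + 1) / 2 + 1) n) : S i ∣ (Icc m n).lcm S :=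
    dvd_lcm (Icc_subset_Icc_left hmn hi)
  obtain ⟨l, hl⟩ : (d : ℤ) ∣ (Icc m n).lcm S :=
    (hS.dvd_apply hd₀ hd₁ n).trans (hS_dvd n (mem_Icc.mpr (by omega)))
  have hl_pos : 0 < l := pos_of_mul_pos_right (hl ▸ hS.lcm_pos hP hQ h₀ h₁ hm n) hdZ.le
  have hl_dvd (i : ℕ) (hi : i ∈ Icc ((n + 1) / 2 + 1) n) : S i / d ∣ l :=
    (Int.ediv_dvd_iff_dvd_mul (hS.dvd_apply hd₀ hd₁ i) hdZ.ne').mpr (hl ▸ hS_dvd i hi)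
  have hcop : IsCoprime (S 0 / d) (S 1 / d) :=
    Int.isCoprime_iff_gcd_eq_one.mpr (Int.gcd_ediv_gcd_ediv_gcd hd)
  have hreduced := (hS.ediv hd₀ hd₁).pow_mul_pow_le_of_forall_dvd hP hPQ h₁Q hcop
    (Int.ediv_nonneg h₀ hdZ.le) (Int.ediv_pos_of_pos_of_dvd h₁ hdZ.le hd₁) hsum hprod hβ hn
    hl_pos hl_dvd
  rw [Int.cast_div hd₀ (mod_cast hdK.ne'), Int.cast_div hd₁ (mod_cast hdK.ne'), mul_div_assoc',
    ← sub_div, Int.cast_natCast] at hreduced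
  rw [hl, Int.cast_mul, Int.cast_natCast, mul_assoc]
  exact mul_le_mul_of_nonneg_left hreduced hdK.le

end IsBinaryRecurrence

theorem rpow_mul_rpow_le_pow_half_mul_pow_quarter_sq {c a : ℝ} (hc : 1 ≤ c) (ha : 1 ≤ a) {n : ℕ}
    (hn : 2 ≤ n) :
    c ^ (((n : ℝ) - 1) / 2) * a ^ ((n : ℝ) ^ 2 / 4 - 5 / 4) ≤
      c ^ (n / 2) * a ^ (n ^ 2 / 4 - 1) := by
  obtain ⟨t, N, ht, hN, hexp⟩ := exists_half_eq_and_quarter_sq_eq hn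
  have hhalf : ((n : ℝ) - 1) / 2 ≤ (n / 2 : ℕ) := by
    have : (n : ℝ) ≤ 2 * (n / 2 : ℕ) + 1 := mod_cast (by omega : n ≤ 2 * (n / 2) + 1)
    linarith
  have hquarter : (n : ℝ) ^ 2 / 4 - 5 / 4 ≤ (n ^ 2 / 4 - 1 : ℕ) := by
    rw [hexp]
    obtain ⟨rfl, rfl⟩ | ⟨rfl, rfl⟩ : (n = 2 * N + 2 ∧ t = N) ∨ (n = 2 * N + 3 ∧ t = N + 1) := by
      omega
    all_goals push_cast; linarith
  rw [← Real.rpow_natCast c, ← Real.rpow_natCast a]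
  gcongr

theorem half_add_sqrt_mul_half_sub_sqrt {p q : ℝ} (h : 0 ≤ p ^ 2 - 4 * q) :
    (p + √(p ^ 2 - 4 * q)) / 2 * ((p - √(p ^ 2 - 4 * q)) / 2) = q := by
  linear_combination -(1 / 4) * Real.sq_sqrt h

theorem half_sub_sqrt_neg {p q : ℝ} (hq : q < 0) : (p - √(p ^ 2 - 4 * q)) / 2 < 0 := by
  have : p < √(p ^ 2 - 4 * q) := Real.lt_sqrt_of_sq_lt (by linarith)
  linarith

theorem lcm_binary_recurrence_lower_bound_general {P Q : ℤ} {R : ℕ → ℤ}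
    (hR : IsBinaryRecurrence P Q R) (hP : 0 < P) (hPQ : IsCoprime P Q) (h₀ : 0 ≤ R 0)
    (h₁ : 0 < R 1) (h₁Q : IsCoprime (R 1 / Int.gcd (R 0) (R 1)) Q) {α β : ℝ}
    (hsum : (P : ℝ) = α + β) (hprod : (Q : ℝ) = α * β) (hβ : β ≤ 0)
    {n m : ℕ} (hm : 1 ≤ m) (hn : 2 ≤ n) (hmn : m ≤ (n + 1) / 2 + 1) :
    (Int.gcd (R 0) (R 1) : ℝ) *
        (((R 1 : ℝ) + (R 0 : ℝ) * |β|) / (Int.gcd (R 0) (R 1) : ℝ)) ^ (((n : ℝ) - 1) / 2) *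
        α ^ ((n : ℝ) ^ 2 / 4 - 5 / 4) ≤
      (((Icc m n).lcm R : ℤ) : ℝ) := by
  have hd : 0 < Int.gcd (R 0) (R 1) := Int.gcd_pos_of_ne_zero_right _ h₁.ne'
  have hα : 1 ≤ α := by
    have hP_one : (1 : ℝ) ≤ P := mod_cast hP
    linarith
  have hc : 1 ≤ ((R 1 : ℝ) + R 0 * |β|) / Int.gcd (R 0) (R 1) := by
    have hgcd_le : (Int.gcd (R 0) (R 1) : ℝ) ≤ R 1 :=
      mod_cast Int.le_of_dvd h₁ (Int.gcd_dvd_right _ _)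
    have h₀_cast : (0 : ℝ) ≤ R 0 := mod_cast h₀
    rw [one_le_div (mod_cast hd)]
    nlinarith [abs_nonneg β]
  have habs : (R 1 : ℝ) - β * R 0 = R 1 + R 0 * |β| := by
    rw [abs_of_nonpos hβ]
    ring
  have hsharp := hR.gcd_mul_pow_mul_pow_le_lcm hP hPQ h₁Q h₀ h₁ hsum hprod hβ hm hn hmn
  rw [habs, mul_assoc] at hsharp
  rw [mul_assoc]
  exact le_trans (mul_le_mul_of_nonneg_left
    (rpow_mul_rpow_le_pow_half_mul_pow_quarter_sq hc hα hn) (Nat.cast_nonneg _)) hsharp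

/-- Lower bound for `lcm(R_m, …, R_n)` when `P > 0`, `Q < 0`,
`R_0, R_1 ≥ 1`, `n ≥ 2` and `m ≤ ⌊(n+1)/2⌋ + 1`, where `α = (P + √Δ)/2` and
`β = (P − √Δ)/2`. -/
theorem lcm_binary_recurrence_lower_bound
    (P Q R0 R1 : ℤ) (R : ℕ → ℤ)
    (hP : 0 < P) (hQ : Q < 0) (hR0pos : 1 ≤ R0) (hR1pos : 1 ≤ R1)
    (hcopPQ : Int.gcd P Q = 1) (hcopR1Q : Int.gcd R1 Q = 1)
    (hR0 : R 0 = R0) (hR1 : R 1 = R1)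
    (hRrec : ∀ n : ℕ, R (n + 2) = P * R (n + 1) - Q * R n)
    (α β : ℝ)
    (hα : α = ((P : ℝ) + Real.sqrt ((P : ℝ) ^ 2 - 4 * (Q : ℝ))) / 2)
    (hβ : β = ((P : ℝ) - Real.sqrt ((P : ℝ) ^ 2 - 4 * (Q : ℝ))) / 2)
    (n m : ℕ) (hm : 1 ≤ m) (hn : 2 ≤ n) (hmn : m ≤ (n + 1) / 2 + 1) :
    ((((Finset.Icc m n).lcm R : ℤ)) : ℝ) ≥
      (Int.gcd R0 R1 : ℝ) *
        (((R1 : ℝ) + (R0 : ℝ) * |β|) / (Int.gcd R0 R1 : ℝ)) ^ (((n : ℝ) - 1) / 2) *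
        α ^ ((n : ℝ) ^ 2 / 4 - (n : ℝ) / 2 - 7 / 4) := by
  subst hR0 hR1
  have hQ_neg : (Q : ℝ) < 0 := mod_cast hQ
  have hP_one : (1 : ℝ) ≤ P := mod_cast hP
  have hβ_neg : β < 0 := hβ ▸ half_sub_sqrt_neg hQ_neg
  have hsum : (P : ℝ) = α + β := by rw [hα, hβ]; ring
  have hprod : (Q : ℝ) = α * β := by
    rw [hα, hβ, half_add_sqrt_mul_half_sub_sqrt (by nlinarith)]
  have hcop : IsCoprime (R 1 / Int.gcd (R 0) (R 1)) Q :=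
    (Int.isCoprime_iff_gcd_eq_one.mpr hcopR1Q).of_isCoprime_of_dvd_left
      (Int.ediv_dvd_of_dvd (Int.gcd_dvd_right _ _))
  refine le_trans ?_ (lcm_binary_recurrence_lower_bound_general hRrec hP
    (Int.isCoprime_iff_gcd_eq_one.mpr hcopPQ) (by omega) hR1pos hcop hsum hprod hβ_neg.le hm hn hmn)
  gcongr ?_ * α ^ ?_
  · linarith
  · linarith [n.cast_nonneg (α := ℝ)]
end

section
/- Let q ≥ 2 be a fixed integer and u_0, r positive integers with gcd(u_0 + r, q) = 1. Define u_n := u_0 + r·(q^n − 1)/(q − 1) for all n ≥ 1. Then for all positive integers n and m with m ≤ ⌊n/2⌋, lcm(u_m, u_{m+1}, …, u_n) ≥ gcd(u_0, r) · (r/gcd(u_0, r))^{n/2 + 1} · q^{n(n−2)/4}. -/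
/-! Since `[k + j]_q = [k]_q + q ^ k [j]_q`, two terms of `u_n = a + b [n]_q` differ by
`u_{k + j} - u_k = b q ^ k [j]_q`, and the coprimality assumptions make every term from `u_k` on
coprime to `b q ^ k`. Comparing the two ways of removing an end term from the product
`u_k ⋯ u_{k + N}` shows, by induction on `N`, that this product divides `[N]_q! L` for every
common multiple `L` of its factors. As `u_k ≥ b` and `u_{k + j} ≥ b q ^ k [j]_q`, the product is at
least `b ^ (N + 1) q ^ (k N) [N]_q!`, so `b ^ (N + 1) q ^ (k N) ≤ L`. The general case reduces to
coprime `a` and `b` by dividing by their gcd, and `k = ⌊n / 2⌋` gives the stated exponents. -/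

open Finset

section Semiring

variable {R : Type*} [CommSemiring R]

/-- The `q`-analogue `[n]_q`, encoded as a geometric sum so that no division is involved. -/
def qNumber (q : R) (n : ℕ) : R := ∑ i ∈ range n, q ^ i

/-- The `q`-factorial `[n]_q! = [1]_q ⋯ [n]_q`. -/
def qFactorial (q : R) (n : ℕ) : R := ∏ j ∈ range n, qNumber q (j + 1)

/-- The `q`-arithmetic sequence `a + b [n]_q` with initial term `a` and parameter `b`. -/
def qArith (a b q : R) (n : ℕ) : R := a + b * qNumber q n

lemma qNumber_add (q : R) (k j : ℕ) : qNumber q (k + j) = qNumber q k + q ^ k * qNumber q j := by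
  simp only [qNumber, sum_range_add, mul_sum, pow_add]

lemma qArith_add (a b q : R) (k j : ℕ) :
    qArith a b q (k + j) = qArith a b q k + b * q ^ k * qNumber q j := by
  simp only [qArith, qNumber_add]
  ring

lemma qArith_succ (a b q : R) (n : ℕ) :
    qArith a b q (n + 1) = a + b + q * (b * qNumber q n) := by
  simp only [qArith, qNumber, geom_sum_succ]
  ring

lemma qArith_mul_left (d a b q : R) (n : ℕ) :
    qArith (d * a) (d * b) q n = d * qArith a b q n := by
  simp only [qArith]
  ring

@[norm_cast]
lemma natCast_qNumber (q n : ℕ) : ((qNumber q n : ℕ) : R) = qNumber (q : R) n := by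
  simp only [qNumber, Nat.cast_sum, Nat.cast_pow]

@[norm_cast]
lemma natCast_qFactorial (q n : ℕ) : ((qFactorial q n : ℕ) : R) = qFactorial (q : R) n := by
  simp only [qFactorial, Nat.cast_prod, natCast_qNumber]

@[norm_cast]
lemma natCast_qArith (a b q n : ℕ) : ((qArith a b q n : ℕ) : R) = qArith (a : R) b q n := by
  simp only [qArith, Nat.cast_add, Nat.cast_mul, natCast_qNumber]

end Semiring

section Divisibility

variable {R : Type*} [CommRing R]

lemma isCoprime_qArith_add {a b q : R} (hab : IsCoprime a b) (hq : IsCoprime (a + b) q) (k i : ℕ) :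
    IsCoprime (qArith a b q (k + i)) (b * q ^ k) := by
  have hb : IsCoprime (qArith a b q (k + i)) b := hab.add_mul_left_left _
  cases k with
  | zero => simpa using hb
  | succ k =>
    have hqk : IsCoprime (qArith a b q (k + 1 + i)) q := by
      rw [Nat.add_right_comm, qArith_succ]
      exact hq.add_mul_left_left _
    exact hb.mul_right hqk.pow_right

theorem prod_dvd_mul_prod_of_add_eq {u c g : ℕ → R}
    (hadd : ∀ k j, u (k + j) = u k + c k * g j) (hcop : ∀ k i, IsCoprime (u (k + i)) (c k))
    {L : R} {N k : ℕ} (hL : ∀ i ≤ N, u (k + i) ∣ L) :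
    ∏ i ∈ range (N + 1), u (k + i) ∣ L * ∏ j ∈ range N, g (j + 1) := by
  induction N generalizing k with
  | zero => simpa using hL 0 le_rfl
  | succ N ih =>
    set T := ∏ i ∈ range (N + 2), u (k + i) with hT
    set F := L * ∏ j ∈ range N, g (j + 1) with hF
    have init_dvd : ∏ i ∈ range (N + 1), u (k + i) ∣ F := ih fun i hi => hL i (by lia)
    have tail_dvd : ∏ i ∈ range (N + 1), u (k + (i + 1)) ∣ F := by
      simp only [← Nat.add_right_comm k 1, ← add_assoc k]
      exact ih fun i hi => by simpa only [add_assoc, add_comm 1] using hL (i + 1) (by lia)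
    have dvd_last : T ∣ F * u (k + (N + 1)) := by
      rw [hT, prod_range_succ]
      exact mul_dvd_mul_right init_dvd _
    have dvd_first : T ∣ F * u k := by
      rw [hT, prod_range_succ']
      exact mul_dvd_mul_right tail_dvd _
    have dvd_diff : T ∣ F * g (N + 1) * c k := by
      have h := dvd_sub dvd_last dvd_first
      rwa [hadd k (N + 1), show F * (u k + c k * g (N + 1)) - F * u k = F * g (N + 1) * c k by
        ring] at h
    have coprime : IsCoprime T (c k) := IsCoprime.prod_left fun i _ => hcop k i
    have h := coprime.dvd_of_dvd_mul_right dvd_diff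
    rwa [hF, mul_assoc, ← prod_range_succ] at h

theorem prod_qArith_dvd_mul_qFactorial {a b q L : R} (hab : IsCoprime a b)
    (hq : IsCoprime (a + b) q) {N k : ℕ} (hL : ∀ i ≤ N, qArith a b q (k + i) ∣ L) :
    ∏ i ∈ range (N + 1), qArith a b q (k + i) ∣ L * qFactorial q N :=
  prod_dvd_mul_prod_of_add_eq (qArith_add a b q) (isCoprime_qArith_add hab hq) hL

end Divisibility

section Order

variable {R : Type*} [CommSemiring R] [PartialOrder R] [IsOrderedRing R] {a b q : R}

lemma qNumber_nonneg (hq : 0 ≤ q) (n : ℕ) : 0 ≤ qNumber q n :=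
  sum_nonneg fun i _ => pow_nonneg hq i

lemma one_le_qNumber (hq : 0 ≤ q) {n : ℕ} (hn : n ≠ 0) : 1 ≤ qNumber q n := by
  simpa [qNumber] using single_le_sum (f := fun i => q ^ i) (fun i _ => pow_nonneg hq i)
    (mem_range.2 (Nat.pos_of_ne_zero hn))

lemma le_qArith (ha : 0 ≤ a) (hb : 0 ≤ b) (hq : 0 ≤ q) {n : ℕ} (hn : n ≠ 0) :
    b ≤ qArith a b q n :=
  (le_mul_of_one_le_right hb (one_le_qNumber hq hn)).trans (le_add_of_nonneg_left ha)

lemma mul_qNumber_le_qArith_add (ha : 0 ≤ a) (hb : 0 ≤ b) (hq : 0 ≤ q) (k j : ℕ) :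
    b * q ^ k * qNumber q j ≤ qArith a b q (k + j) := by
  rw [qArith_add]
  exact le_add_of_nonneg_left (add_nonneg ha (mul_nonneg hb (qNumber_nonneg hq k)))

theorem mul_qFactorial_le_prod_qArith (ha : 0 ≤ a) (hb : 0 ≤ b) (hq : 0 ≤ q) {k : ℕ}
    (hk : k ≠ 0) (N : ℕ) :
    b ^ (N + 1) * q ^ (k * N) * qFactorial q N ≤ ∏ i ∈ range (N + 1), qArith a b q (k + i) := by
  calc b ^ (N + 1) * q ^ (k * N) * qFactorial q N
      = (∏ j ∈ range N, b * q ^ k * qNumber q (j + 1)) * b := by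
        rw [prod_mul_distrib, prod_const, card_range, mul_pow, ← pow_mul, qFactorial]
        ring
    _ ≤ (∏ j ∈ range N, qArith a b q (k + (j + 1))) * qArith a b q k := by
        have factor_nonneg (j : ℕ) : 0 ≤ b * q ^ k * qNumber q (j + 1) :=
          mul_nonneg (mul_nonneg hb (pow_nonneg hq k)) (qNumber_nonneg hq _)
        have factor_le (j : ℕ) := mul_qNumber_le_qArith_add ha hb hq k (j + 1)
        exact mul_le_mul (prod_le_prod (fun j _ => factor_nonneg j) fun j _ => factor_le j)
          (le_qArith ha hb hq hk) hb
          (prod_nonneg fun j _ => (factor_nonneg j).trans (factor_le j))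
    _ = ∏ i ∈ range (N + 1), qArith a b q (k + i) :=
        (prod_range_succ' (fun i => qArith a b q (k + i)) N).symm

lemma qFactorial_pos {R : Type*} [CommSemiring R] [PartialOrder R] [IsStrictOrderedRing R]
    {q : R} (hq : 0 ≤ q) (n : ℕ) : 0 < qFactorial q n :=
  prod_pos fun j _ => zero_lt_one.trans_le (one_le_qNumber hq j.succ_ne_zero)

end Order

section Lcm

lemma lcm_mul_left_of_nonempty {ι α : Type*} [CommMonoidWithZero α]
    [StrongNormalizedGCDMonoid α] {s : Finset ι} (hs : s.Nonempty) (a : α) (f : ι → α) :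
    (s.lcm fun i => a * f i) = normalize a * s.lcm f := by
  classical
  induction hs using Nonempty.cons_induction with
  | singleton i => simp
  | cons i s _ _ ih =>
    rw [cons_eq_insert, lcm_insert, lcm_insert, ih, ← lcm_mul_left]
    exact lcm_eq_of_associated_right ((normalize_associated a).mul_right _) _

theorem pow_mul_pow_le_of_qArith_dvd {a b q L k N : ℕ} (hab : a.Coprime b)
    (hq : (a + b).Coprime q) (hk : k ≠ 0) (hL0 : L ≠ 0)
    (hL : ∀ i ≤ N, qArith a b q (k + i) ∣ L) : b ^ (N + 1) * q ^ (k * N) ≤ L := by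
  have prod_dvd : ∏ i ∈ range (N + 1), qArith a b q (k + i) ∣ L * qFactorial q N := by
    have hab' : IsCoprime (a : ℤ) b := Nat.isCoprime_iff_coprime.2 hab
    have hq' : IsCoprime ((a : ℤ) + b) q := by exact_mod_cast Nat.isCoprime_iff_coprime.2 hq
    have hL' : ∀ i ≤ N, qArith (a : ℤ) b q (k + i) ∣ (L : ℤ) := by exact_mod_cast hL
    exact_mod_cast prod_qArith_dvd_mul_qFactorial hab' hq' hL'
  have factorial_pos : 0 < qFactorial q N := qFactorial_pos q.zero_le N
  refine Nat.le_of_mul_le_mul_right ?_ factorial_pos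
  calc b ^ (N + 1) * q ^ (k * N) * qFactorial q N
      ≤ ∏ i ∈ range (N + 1), qArith a b q (k + i) :=
        mul_qFactorial_le_prod_qArith a.zero_le b.zero_le q.zero_le hk N
    _ ≤ L * qFactorial q N :=
        Nat.le_of_dvd (Nat.mul_pos (Nat.pos_of_ne_zero hL0) factorial_pos) prod_dvd

theorem pow_mul_pow_le_lcm_qArith {a b q m k n : ℕ} (hab : a.Coprime b)
    (hq : (a + b).Coprime q) (hb : 0 < b) (hm : 1 ≤ m) (hmk : m ≤ k) (hkn : k ≤ n) :
    b ^ (n - k + 1) * q ^ (k * (n - k)) ≤ (Icc m n).lcm (qArith a b q) := by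
  have lcm_ne_zero : (Icc m n).lcm (qArith a b q) ≠ 0 :=
    lcm_ne_zero_iff.2 fun i hi =>
      have hi0 : i ≠ 0 := by have := (mem_Icc.1 hi).1; lia
      (hb.trans_le (le_qArith a.zero_le b.zero_le q.zero_le hi0)).ne'
  exact pow_mul_pow_le_of_qArith_dvd hab hq (by lia) lcm_ne_zero fun i hi =>
    dvd_lcm (mem_Icc.2 ⟨by lia, by lia⟩)

theorem gcd_mul_pow_mul_pow_le_lcm_qArith {a b q m k n : ℕ} (hq : (a + b).Coprime q)
    (hb : 0 < b) (hm : 1 ≤ m) (hmk : m ≤ k) (hkn : k ≤ n) :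
    a.gcd b * ((b / a.gcd b) ^ (n - k + 1) * q ^ (k * (n - k))) ≤
      (Icc m n).lcm (qArith a b q) := by
  have gcd_pos : 0 < a.gcd b := Nat.gcd_pos_of_pos_right a hb
  obtain ⟨a', b', hab', ha, hb'⟩ := Nat.exists_coprime a b
  generalize a.gcd b = d at *
  subst ha hb'
  have hq' : (a' + b').Coprime q := hq.coprime_dvd_left ⟨d, by ring⟩
  have lcm_eq : (Icc m n).lcm (qArith (a' * d) (b' * d) q) =
      d * (Icc m n).lcm (qArith a' b' q) := by
    rw [← normalize_eq d, ← lcm_mul_left_of_nonempty (nonempty_Icc.2 (hmk.trans hkn))]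
    exact Finset.lcm_congr rfl fun i _ => by
      rw [normalize_eq, mul_comm a', mul_comm b', qArith_mul_left]
  rw [lcm_eq, Nat.mul_div_cancel _ gcd_pos]
  exact Nat.mul_le_mul_left d
    (pow_mul_pow_le_lcm_qArith hab' hq' (Nat.pos_of_mul_pos_right hb) hm hmk hkn)

end Lcm

lemma rpow_mul_rpow_le_pow_mul_pow_half {x y : ℝ} (hx : 1 ≤ x) (hy : 1 ≤ y) (n : ℕ) :
    x ^ ((n : ℝ) / 2 + 1) * y ^ ((n : ℝ) * ((n : ℝ) - 2) / 4) ≤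
      x ^ (n - n / 2 + 1) * y ^ (n / 2 * (n - n / 2)) := by
  obtain ⟨k, l, hk, hl, hn, hkl, hlk⟩ : ∃ k l, n / 2 = k ∧ n - n / 2 = l ∧ n = k + l ∧
      k ≤ l ∧ l ≤ k + 1 := ⟨_, _, rfl, rfl, by lia, by lia, by lia⟩
  have hkl' : (k : ℝ) ≤ l := by exact_mod_cast hkl
  have hlk' : (l : ℝ) ≤ k + 1 := by exact_mod_cast hlk
  have x_exponent_le : ((k + l : ℕ) : ℝ) / 2 + 1 ≤ (l + 1 : ℕ) := by
    push_cast; linarith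
  have y_exponent_le : ((k + l : ℕ) : ℝ) * ((k + l : ℕ) - 2) / 4 ≤ (k * l : ℕ) := by
    push_cast; nlinarith [k.cast_nonneg (α := ℝ)]
  rw [hl, hk, hn, ← Real.rpow_natCast x, ← Real.rpow_natCast y]
  gcongr

/-- Lower bound for the lcm of a `q`-arithmetic progression
`u_n = u_0 + r·[n]_q` (with `[n]_q = (qⁿ − 1)/(q − 1)`), for `m ≤ ⌊n/2⌋`. -/
theorem lcm_q_arithmetic_lower_bound
    (q u0 r : ℕ) (hq : 2 ≤ q) (hu0 : 0 < u0) (hr : 0 < r)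
    (hcop : Nat.gcd (u0 + r) q = 1)
    (u : ℕ → ℕ) (hu : ∀ n : ℕ, 1 ≤ n → u n = u0 + r * ((q ^ n - 1) / (q - 1)))
    (n m : ℕ) (hm : 1 ≤ m) (hn : 1 ≤ n) (hmn : m ≤ n / 2) :
    ((((Finset.Icc m n).lcm u : ℕ)) : ℝ) ≥
      (Nat.gcd u0 r : ℝ) * ((r : ℝ) / (Nat.gcd u0 r : ℝ)) ^ ((n : ℝ) / 2 + 1) *
        (q : ℝ) ^ ((n : ℝ) * ((n : ℝ) - 2) / 4) := by
  have lcm_eq : (Icc m n).lcm u = (Icc m n).lcm (qArith u0 r q) :=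
    Finset.lcm_congr rfl fun i hi => by
      rw [hu i (hm.trans (mem_Icc.1 hi).1), ← Nat.geomSum_eq hq, qArith, qNumber]
  have gcd_dvd : u0.gcd r ∣ r := Nat.gcd_dvd_right u0 r
  have one_le_quot : (1 : ℝ) ≤ (r / u0.gcd r : ℕ) := by
    exact_mod_cast Nat.div_pos (Nat.le_of_dvd hr gcd_dvd) (Nat.gcd_pos_of_pos_right u0 hr)
  have one_le_q : (1 : ℝ) ≤ q := by exact_mod_cast one_le_two.trans hq
  rw [lcm_eq, ← Nat.cast_div_charZero gcd_dvd, mul_assoc]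
  calc _ ≤ (u0.gcd r : ℝ) *
        ((r / u0.gcd r : ℕ) ^ (n - n / 2 + 1) * (q : ℝ) ^ (n / 2 * (n - n / 2))) :=
        mul_le_mul_of_nonneg_left
          (rpow_mul_rpow_le_pow_mul_pow_half one_le_quot one_le_q n) (Nat.cast_nonneg _)
    _ ≤ _ := by
        exact_mod_cast gcd_mul_pow_mul_pow_le_lcm_qArith hcop hr hm hmn (n.div_le_self 2)
end

section
/- Let m be a fixed positive integer. Then log lcm(F_n, F_{n+1}, …, F_{n+m}) ∼ n·(m+1)·log Φ as n → ∞; that is, lim_{n→∞} log lcm(F_n, F_{n+1}, …, F_{n+m}) / (n·(m+1)·log Φ) = 1. -/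
/-!
In a strong divisibility sequence `f`, the gcd of two terms `f i` and `f j` divides `f (j - i)`, so
the pairwise gcds of `f (n + k)`, with `k` in a fixed finite set `s`, are bounded independently of
`n`. Hence the lcm of these terms agrees with their product up to a bounded factor, and its
logarithm is `∑ k ∈ s, log (f (n + k)) + O(1)`. For the Fibonacci sequence, each of the `#s`
summands is asymptotic to `n * log φ`.
-/

open Finset Filter Topology Real

section NormalizedGCDMonoid

variable {ι α : Type*} [CommMonoidWithZero α] [NormalizedGCDMonoid α]

theorem gcd_lcm_dvd_prod_gcd (c : α) (s : Finset ι) (f : ι → α) :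
    gcd c (s.lcm f) ∣ ∏ i ∈ s, gcd c (f i) := by
  classical
  induction s using Finset.induction_on with
  | empty => simp
  | insert a s ha ih =>
    rw [lcm_insert, prod_insert ha]
    calc gcd c (lcm (f a) (s.lcm f))
      _ ∣ gcd c (f a * s.lcm f) :=
        gcd_dvd_gcd dvd_rfl (lcm_dvd (dvd_mul_right _ _) (dvd_mul_left _ _))
      _ ∣ gcd c (f a) * gcd c (s.lcm f) := gcd_mul_dvd_mul_gcd _ _ _
      _ ∣ gcd c (f a) * ∏ i ∈ s, gcd c (f i) := mul_dvd_mul_left _ ih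

theorem prod_dvd_lcm_mul_prod_gcd [LinearOrder ι] (s : Finset ι) (f : ι → α) :
    ∏ i ∈ s, f i ∣ s.lcm f * ∏ j ∈ s, ∏ i ∈ s with i < j, gcd (f j) (f i) := by
  induction s using Finset.induction_on_max with
  | empty => simp
  | insert a s hlt ih =>
    have ha : a ∉ s := fun h ↦ (hlt a h).false
    have filter_lt_max : {i ∈ insert a s | i < a} = s := by
      rw [filter_insert, if_neg (lt_irrefl a), filter_true_of_mem hlt]
    have filter_lt_of_mem (j) (hj : j ∈ s) : {i ∈ insert a s | i < j} = {i ∈ s | i < j} := by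
      rw [filter_insert, if_neg (hlt j hj).not_gt]
    set P := ∏ j ∈ s, ∏ i ∈ s with i < j, gcd (f j) (f i)
    have prod_below_mem : ∏ j ∈ s, ∏ i ∈ insert a s with i < j, gcd (f j) (f i) = P :=
      prod_congr rfl fun j hj ↦ by rw [filter_lt_of_mem j hj]
    rw [prod_insert ha, lcm_insert, prod_insert ha, filter_lt_max, prod_below_mem]
    calc f a * ∏ i ∈ s, f i
      _ ∣ f a * (s.lcm f * P) := mul_dvd_mul_left _ ih
      _ = f a * s.lcm f * P := (mul_assoc _ _ _).symm
      _ ∣ gcd (f a) (s.lcm f) * lcm (f a) (s.lcm f) * P :=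
        mul_dvd_mul_right (gcd_mul_lcm _ _).symm.dvd _
      _ = lcm (f a) (s.lcm f) * (gcd (f a) (s.lcm f) * P) := by ac_rfl
      _ ∣ lcm (f a) (s.lcm f) * ((∏ i ∈ s, gcd (f a) (f i)) * P) :=
        mul_dvd_mul_left _ (mul_dvd_mul_right (gcd_lcm_dvd_prod_gcd _ _ _) _)

end NormalizedGCDMonoid

theorem log_lcm_le_sum_log {ι : Type*} {s : Finset ι} {f : ι → ℕ} (hf : ∀ i ∈ s, f i ≠ 0) :
    log (s.lcm f : ℕ) ≤ ∑ i ∈ s, log (f i) := by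
  have lcm_le_prod : s.lcm f ≤ ∏ i ∈ s, f i :=
    Nat.le_of_dvd (prod_pos fun i hi ↦ Nat.pos_of_ne_zero (hf i hi)) (s.lcm_dvd_prod f)
  have lcm_f_pos : 0 < s.lcm f := Nat.pos_of_ne_zero (lcm_ne_zero_iff.2 hf)
  calc log (s.lcm f : ℕ)
    _ ≤ log (∏ i ∈ s, f i : ℕ) := by gcongr
    _ = ∑ i ∈ s, log (f i) := by
      rw [Nat.cast_prod, log_prod fun i hi ↦ Nat.cast_ne_zero.2 (hf i hi)]

section StrongDvdSequence

variable {f : ℕ → ℕ}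

theorem gcd_dvd_apply_sub (hf : Nat.IsStrongDvdSequence f) {i j : ℕ} :
    (f j).gcd (f i) ∣ f (j - i) := by
  rw [hf j i]
  exact hf.isDvdSequence _ _ (Nat.dvd_sub (Nat.gcd_dvd_left j i) (Nat.gcd_dvd_right j i))

theorem prod_shift_dvd_lcm_mul_prod (hf : Nat.IsStrongDvdSequence f) (s : Finset ℕ) (n : ℕ) :
    ∏ k ∈ s, f (n + k) ∣
      s.lcm (fun k ↦ f (n + k)) * ∏ j ∈ s, ∏ i ∈ s with i < j, f (j - i) := by
  refine (prod_dvd_lcm_mul_prod_gcd s fun k ↦ f (n + k)).trans (mul_dvd_mul_left _ ?_)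
  refine prod_dvd_prod_of_dvd _ _ fun j _ ↦ prod_dvd_prod_of_dvd _ _ fun i _ ↦ ?_
  rw [← Nat.add_sub_add_left n j i]
  exact gcd_dvd_apply_sub hf

theorem sum_log_shift_le_log_lcm_add_log (hf : Nat.IsStrongDvdSequence f)
    (hf₀ : ∀ n ≠ 0, f n ≠ 0) (s : Finset ℕ) {n : ℕ} (hn : n ≠ 0) :
    ∑ k ∈ s, log (f (n + k)) ≤ log (s.lcm fun k ↦ f (n + k) : ℕ) +
      log (∏ j ∈ s, ∏ i ∈ s with i < j, f (j - i) : ℕ) := by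
  have shift_ne_zero (k : ℕ) : f (n + k) ≠ 0 := hf₀ _ (by lia)
  set L := s.lcm fun k ↦ f (n + k)
  set P := ∏ j ∈ s, ∏ i ∈ s with i < j, f (j - i)
  have hL : L ≠ 0 := lcm_ne_zero_iff.2 fun k _ ↦ shift_ne_zero k
  have hP : P ≠ 0 := prod_ne_zero_iff.2 fun j _ ↦ prod_ne_zero_iff.2 fun i hi ↦
    hf₀ _ (Nat.sub_ne_zero_of_lt (mem_filter.1 hi).2)
  have prod_shift_pos : 0 < ∏ k ∈ s, f (n + k) :=
    prod_pos fun k _ ↦ Nat.pos_of_ne_zero (shift_ne_zero k)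
  have prod_shift_le : ∏ k ∈ s, f (n + k) ≤ L * P :=
    Nat.le_of_dvd (Nat.mul_pos hL.bot_lt hP.bot_lt) (prod_shift_dvd_lcm_mul_prod hf s n)
  calc ∑ k ∈ s, log (f (n + k))
    _ = log (∏ k ∈ s, f (n + k) : ℕ) := by
      rw [Nat.cast_prod, log_prod fun k _ ↦ Nat.cast_ne_zero.2 (shift_ne_zero k)]
    _ ≤ log (L * P : ℕ) := by gcongr
    _ = log L + log P := by
      rw [Nat.cast_mul, log_mul (Nat.cast_ne_zero.2 hL) (Nat.cast_ne_zero.2 hP)]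

end StrongDvdSequence

theorem tendsto_shift_div_natCast {u : ℕ → ℝ} {l : ℝ}
    (hu : Tendsto (fun n ↦ u n / n) atTop (𝓝 l)) (k : ℕ) :
    Tendsto (fun n ↦ u (n + k) / n) atTop (𝓝 l) := by
  have ratio : Tendsto (fun n : ℕ ↦ ((n : ℝ) / (n + k))⁻¹) atTop (𝓝 1) := by
    simpa only [inv_one] using (tendsto_natCast_div_add_atTop (k : ℝ)).inv₀ one_ne_zero
  have product := (hu.comp (tendsto_add_atTop_nat k)).mul ratio
  rw [mul_one] at product
  refine product.congr' ?_
  filter_upwards [eventually_ne_atTop 0] with n hn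
  simp only [Function.comp_apply, Nat.cast_add]
  field_simp

theorem tendsto_log_lcm_shift_div {f : ℕ → ℕ} (hf : Nat.IsStrongDvdSequence f)
    (hf₀ : ∀ n ≠ 0, f n ≠ 0) {l : ℝ} (hl : Tendsto (fun n ↦ log (f n) / n) atTop (𝓝 l))
    (s : Finset ℕ) :
    Tendsto (fun n ↦ log (s.lcm fun k ↦ f (n + k) : ℕ) / n) atTop (𝓝 (#s * l)) := by
  set C := log (∏ j ∈ s, ∏ i ∈ s with i < j, f (j - i) : ℕ)
  have upper : Tendsto (fun n : ℕ ↦ (∑ k ∈ s, log (f (n + k))) / n) atTop (𝓝 (#s * l)) := by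
    simpa only [sum_div, sum_const, nsmul_eq_mul] using
      tendsto_finsetSum s fun k _ ↦ tendsto_shift_div_natCast hl k
  have lower : Tendsto (fun n : ℕ ↦ (∑ k ∈ s, log (f (n + k)) - C) / n) atTop (𝓝 (#s * l)) := by
    simpa only [sub_div, sub_zero] using upper.sub (tendsto_const_div_atTop_nhds_zero_nat C)
  refine tendsto_of_tendsto_of_tendsto_of_le_of_le' lower upper ?_ ?_
  · filter_upwards [eventually_ne_atTop 0] with n hn
    gcongr
    exact sub_le_iff_le_add.2 (sum_log_shift_le_log_lcm_add_log hf hf₀ s hn)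
  · filter_upwards [eventually_ne_atTop 0] with n hn
    gcongr
    exact log_lcm_le_sum_log fun k _ ↦ hf₀ _ (by lia)

theorem fib_succ_le_goldenRatio_pow (n : ℕ) : (Nat.fib (n + 1) : ℝ) ≤ goldenRatio ^ n := by
  rw [← fib_succ_sub_goldenConj_mul_fib, le_sub_self_iff]
  exact mul_nonpos_of_nonpos_of_nonneg goldenConj_neg.le (Nat.cast_nonneg _)

theorem goldenRatio_pow_le_fib_add_two (n : ℕ) : goldenRatio ^ n ≤ Nat.fib (n + 2) := by
  have neg_goldenConj_mul_le : -goldenConj * Nat.fib n ≤ 1 * Nat.fib n := by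
    gcongr
    exact (neg_lt.1 neg_one_lt_goldenConj).le
  rw [← fib_succ_sub_goldenConj_mul_fib, Nat.fib_add_two, Nat.cast_add]
  linarith

theorem tendsto_log_fib_div :
    Tendsto (fun n ↦ log (Nat.fib n) / n) atTop (𝓝 (log goldenRatio)) := by
  rw [← tendsto_add_atTop_iff_nat 2]
  have log_goldenRatio_pos : 0 < log goldenRatio := log_pos one_lt_goldenRatio
  have lower : Tendsto (fun n : ℕ ↦ (n : ℝ) / (n + 2) * log goldenRatio) atTop
      (𝓝 (log goldenRatio)) := by
    simpa only [one_mul] using (tendsto_natCast_div_add_atTop (2 : ℝ)).mul_const (log goldenRatio)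
  refine tendsto_of_tendsto_of_tendsto_of_le_of_le lower tendsto_const_nhds (fun n ↦ ?_) fun n ↦ ?_
  · have mul_log_le := log_le_log (pow_pos goldenRatio_pos n) (goldenRatio_pow_le_fib_add_two n)
    rw [log_pow] at mul_log_le
    simp only [Nat.cast_add, Nat.cast_ofNat, div_mul_eq_mul_div]
    gcongr
  · have log_fib_le := log_le_log (Nat.cast_pos.2 (Nat.fib_pos.2 (by lia)))
      (fib_succ_le_goldenRatio_pow (n + 1))
    rw [log_pow] at log_fib_le
    rw [div_le_iff₀ (by positivity)]
    push_cast at log_fib_le ⊢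
    linarith

theorem log_lcm_fibonacci_asymptotic_general {s : Finset ℕ} (hs : s.Nonempty) :
    Tendsto (fun n : ℕ ↦ log (s.lcm fun k ↦ Nat.fib (n + k) : ℕ) / (n * #s * log goldenRatio))
      atTop (𝓝 1) := by
  have limit_ne_zero : #s * log goldenRatio ≠ 0 :=
    mul_ne_zero (Nat.cast_ne_zero.2 hs.card_ne_zero) (log_pos one_lt_goldenRatio).ne'
  have tendsto_div := tendsto_log_lcm_shift_div Nat.isStrongDvdSequence_fib
    (fun n hn ↦ (Nat.fib_pos.2 hn.bot_lt).ne') tendsto_log_fib_div s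
  simpa only [div_div, mul_assoc, div_self limit_ne_zero] using
    tendsto_div.div_const (#s * log goldenRatio)

/-- For a fixed positive integer `m`,
`log lcm(F_n, …, F_{n+m}) ∼ n(m+1)log Φ` as `n → ∞`, where `Φ = (1+√5)/2`. -/
theorem log_lcm_fibonacci_asymptotic
    (Φ : ℝ) (hΦ : Φ = (1 + Real.sqrt 5) / 2)
    (m : ℕ) (hm : 1 ≤ m) :
    Filter.Tendsto
      (fun n : ℕ =>
        Real.log (((Finset.Icc n (n + m)).lcm Nat.fib : ℕ) : ℝ) /
          ((n : ℝ) * ((m : ℝ) + 1) * Real.log Φ))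
      Filter.atTop (nhds 1) := by
  obtain rfl : Φ = goldenRatio := hΦ
  have lcm_Icc (n : ℕ) : (Icc n (n + m)).lcm Nat.fib = (Icc 0 m).lcm fun k ↦ Nat.fib (n + k) := by
    rw [← Function.comp_def Nat.fib (n + ·), ← lcm_image, image_add_left_Icc, add_zero]
  simpa [lcm_Icc] using log_lcm_fibonacci_asymptotic_general (nonempty_Icc.2 m.zero_le)
end

section
/- For any positive integer n, lcm(U_1, U_2, …, U_n) = lcm(U_n, U_{n−1}, …, U_{n−⌈n/2⌉+1}). -/
/-!
Lucas sequences are divisibility sequences: by the addition formula, modulo `U m` the term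
`U (m * (j + 1))` is a multiple of `U (m * j)`. Every `k` with `1 ≤ k ≤ n` has a multiple in
`(n / 2, n]`, namely the largest multiple `n - n % k` of `k` not exceeding `n`, so each of
`U 1, …, U n` divides some term of the upper half.
-/

theorem exists_dvd_mem_Icc_upper_half {k n : ℕ} (hk : 0 < k) (hkn : k ≤ n) :
    ∃ m ∈ Finset.Icc (n / 2 + 1) n, k ∣ m := by
  refine ⟨k * (n / k), Finset.mem_Icc.mpr ⟨?_, Nat.mul_div_le n k⟩, dvd_mul_right k _⟩
  have hmod : n % k < k := Nat.mod_lt n hk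
  have hle : k ≤ k * (n / k) := Nat.le_mul_of_pos_right k (Nat.div_pos hkn hk)
  have hdiv : k * (n / k) + n % k = n := Nat.div_add_mod n k
  omega

theorem lcm_Icc_one_eq_lcm_Icc_upper_half {α : Type*} [CommMonoidWithZero α]
    [NormalizedGCDMonoid α] {f : ℕ → α} (hf : IsDvdSequence f) (n : ℕ) :
    (Finset.Icc 1 n).lcm f = (Finset.Icc (n / 2 + 1) n).lcm f := by
  refine dvd_antisymm_of_normalize_eq Finset.normalize_lcm Finset.normalize_lcm
    (Finset.lcm_dvd fun k hk ↦ ?_)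
    (Finset.lcm_mono (Finset.Icc_subset_Icc_left (Nat.le_add_left 1 _)))
  obtain ⟨hk, hkn⟩ := Finset.mem_Icc.mp hk
  obtain ⟨m, hm, hkm⟩ := exists_dvd_mem_Icc_upper_half hk hkn
  exact (hf k m hkm).trans (Finset.dvd_lcm hm)

/-- `U` is the Lucas sequence `U(P, Q)` (of the first kind), over an arbitrary commutative ring.
It is a predicate on sequences, so that it applies to any `U` given by its recurrence. -/
structure IsLucasSequence {R : Type*} [CommRing R] (P Q : R) (U : ℕ → R) : Prop where
  zero : U 0 = 0
  one : U 1 = 1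
  add_two (n : ℕ) : U (n + 2) = P * U (n + 1) - Q * U n

namespace IsLucasSequence

variable {R : Type*} [CommRing R] {P Q : R} {U : ℕ → R}

theorem apply_add_add_one (hU : IsLucasSequence P Q U) (m k : ℕ) :
    U (m + k + 1) = U (m + 1) * U (k + 1) - Q * U m * U k := by
  induction k using Nat.twoStepInduction with
  | zero => simp [hU.zero, hU.one]
  | one =>
    rw [hU.add_two m, hU.add_two 0, hU.zero, hU.one]
    ring
  | more k ih₀ ih₁ =>
    calc U (m + (k + 2) + 1)
        = P * U (m + (k + 1) + 1) - Q * U (m + k + 1) := hU.add_two (m + k + 1)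
      _ = U (m + 1) * (P * U (k + 2) - Q * U (k + 1)) -
            Q * U m * (P * U (k + 1) - Q * U k) := by rw [ih₀, ih₁]; ring
      _ = U (m + 1) * U (k + 2 + 1) - Q * U m * U (k + 2) := by
          rw [← hU.add_two (k + 1), ← hU.add_two k]

theorem dvd_apply_mul (hU : IsLucasSequence P Q U) (m j : ℕ) : U m ∣ U (m * j) := by
  induction j with
  | zero => simp [hU.zero]
  | succ j ih =>
    cases m with
    | zero => simp
    | succ m =>
      rw [Nat.mul_succ, ← Nat.add_assoc, hU.apply_add_add_one]
      exact dvd_sub (dvd_mul_left _ _) ((ih.mul_left Q).mul_right _)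

theorem isDvdSequence (hU : IsLucasSequence P Q U) : IsDvdSequence U := by
  rintro m _ ⟨j, rfl⟩
  exact hU.dvd_apply_mul m j

end IsLucasSequence

theorem lcm_lucas_upper_half_general {R : Type*} [CommRing R] [NormalizedGCDMonoid R] {P Q : R}
    {U : ℕ → R} (hU : IsLucasSequence P Q U) (n : ℕ) :
    (Finset.Icc 1 n).lcm U = (Finset.Icc (n - (n + 1) / 2 + 1) n).lcm U := by
  have hhalf : n - (n + 1) / 2 = n / 2 := by omega
  rw [hhalf]
  exact lcm_Icc_one_eq_lcm_Icc_upper_half hU.isDvdSequence n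

/-- For any positive integer `n`,
`lcm(U_1, U_2, …, U_n) = lcm(U_n, U_{n−1}, …, U_{n−⌈n/2⌉+1})`
(here `⌈n/2⌉ = (n+1)/2` in natural-number arithmetic). -/
theorem lcm_lucas_upper_half
    (P Q : ℤ) (U : ℕ → ℤ)
    (hPQ : P * Q ≠ 0) (hΔ : P ^ 2 - 4 * Q ≠ 0) (hcopPQ : Int.gcd P Q = 1)
    (α β : ℂ) (hsum : α + β = (P : ℂ)) (hprod : α * β = (Q : ℂ))
    (hru : ∀ j : ℕ, 0 < j → (α / β) ^ j ≠ 1)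
    (hU0 : U 0 = 0) (hU1 : U 1 = 1)
    (hUrec : ∀ n : ℕ, U (n + 2) = P * U (n + 1) - Q * U n)
    (n : ℕ) (hn : 1 ≤ n) :
    (Finset.Icc 1 n).lcm U = (Finset.Icc (n - (n + 1) / 2 + 1) n).lcm U :=
  lcm_lucas_upper_half_general ⟨hU0, hU1, hUrec⟩ n
end
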